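/- Let i ∈ {1,2} and let n ≥ 32. If the statements T(n, t(n); s_i(n−24), 0, 0) and T(n−24, s_i(n−24); 0, 0, 0) are true, then the statement T(n, s_i(n); 0, 0, 0) is true; i.e., there exist ℓ_1, m_1, …, ℓ_{s_i(n)}, m_{s_i(n)} ∈ ℂ^{n+1} such that dim_ℂ Σ_{j=1}^{s_i(n)} (ℓ_j²·U + ℓ_j·m_j·U) = min{(2n+1)·s_i(n), C(n+3,3)}. -/

import Mathlib

open MvPolynomial

/-- The linear form associated with a coefficient vector `v ∈ ℂ^{n+1}`. -/
noncomputable def lin {n : ℕ} (v : Fin (n + 1) → ℂ) : MvPolynomial (Fin (n + 1)) ℂ :=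
  ∑ j, MvPolynomial.C (v j) * MvPolynomial.X j

/-- The subspace `f·U = {f·u : u ∈ U}` of the polynomial ring, where `U` is the
space of linear forms. -/
noncomputable def mulU {n : ℕ} (f : MvPolynomial (Fin (n + 1)) ℂ) :
    Submodule ℂ (MvPolynomial (Fin (n + 1)) ℂ) :=
  Submodule.span ℂ (Set.range fun j : Fin (n + 1) => f * MvPolynomial.X j)

/-- The affine cone `ℓ^{d-1}·U + ℓ^{d-2}·m·U` over the tangent space to the tangential
variety `T_{n,d}` of the `d`-th Veronese variety at the point `[ℓ^{d-1} m]`. -/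
noncomputable def tanCone {n : ℕ} (d : ℕ) (ℓ m : Fin (n + 1) → ℂ) :
    Submodule ℂ (MvPolynomial (Fin (n + 1)) ℂ) :=
  mulU (lin ℓ ^ (d - 1)) ⊔ mulU (lin ℓ ^ (d - 2) * lin m)

/-- `v ∈ U_{i+1}`, i.e. the coordinates of `v` indexed by `{24i, …, 24i+23}` vanish. -/
def memU {n : ℕ} (i : Fin 3) (v : Fin (n + 1) → ℂ) : Prop :=
  ∀ j : Fin (n + 1), 24 * (i : ℕ) ≤ (j : ℕ) → (j : ℕ) < 24 * (i : ℕ) + 24 → v j = 0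

/-- `S_3(U_{i+1})`: the span of all products of three linear forms belonging to `U_{i+1}`. -/
noncomputable def S3U {n : ℕ} (i : Fin 3) : Submodule ℂ (MvPolynomial (Fin (n + 1)) ℂ) :=
  Submodule.span ℂ
    {p | ∃ a b c : Fin (n + 1) → ℂ,
      memU i a ∧ memU i b ∧ memU i c ∧ p = lin a * lin b * lin c}

/-- `v ∈ U_K`, the span of the variables `x_0, …, x_71`. -/
def memK {n : ℕ} (v : Fin (n + 1) → ℂ) : Prop :=
  ∀ j : Fin (n + 1), 72 ≤ (j : ℕ) → v j = 0

/-- `S_3(U_K)`: the span of all products of three linear forms in `x_0, …, x_71`. -/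
noncomputable def S3K (n : ℕ) : Submodule ℂ (MvPolynomial (Fin (n + 1)) ℂ) :=
  Submodule.span ℂ
    {p | ∃ a b c : Fin (n + 1) → ℂ,
      memK a ∧ memK b ∧ memK c ∧ p = lin a * lin b * lin c}

/-- The alternating sum `Σ_{j=1}^k (−1)^{j−1} C(k,j) · C(n−24j+3, 3)` (with the convention
`C(m,3) = 0` for `m < 3`, realized by truncated subtraction `n+3−24j`). -/
def altsum (n k : ℕ) : ℤ :=
  ∑ j ∈ Finset.Icc 1 k, (-1 : ℤ) ^ (j - 1) * (k.choose j : ℤ) * ((n + 3 - 24 * j).choose 3 : ℤ)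

/-- `k = #{i : a_i ≠ 0}`. -/
def kcount (a : Fin 3 → ℕ) : ℕ := (Finset.univ.filter fun i => a i ≠ 0).card

/-- The expected dimension `w(n, s; a_1, a_2, a_3)`, as an integer. -/
def expdimZ (n s : ℕ) (a : Fin 3 → ℕ) : ℤ :=
  min (altsum n (kcount a) + 48 * ((a 0 + a 1 + a 2 : ℕ) : ℤ) + (2 * n + 1) * s)
    (((n + 3).choose 3 : ℤ))

/-- The subspace `W(n, s; a_1, a_2, a_3)` determined by the given points. -/
noncomputable def Wspace {n s : ℕ} {a : Fin 3 → ℕ}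
    (ℓ m : Fin s → Fin (n + 1) → ℂ)
    (ℓ' m' : (i : Fin 3) → Fin (a i) → Fin (n + 1) → ℂ) :
    Submodule ℂ (MvPolynomial (Fin (n + 1)) ℂ) :=
  (⨆ i : {i : Fin 3 // a i ≠ 0},
      (S3U i.1 ⊔ ⨆ j : Fin (a i.1), tanCone 3 (ℓ' i.1 j) (m' i.1 j)))
    ⊔ ⨆ i : Fin s, tanCone 3 (ℓ i) (m i)

/-- The statement `T(n, s; a_1, a_2, a_3)`: some choice of points realizes the expected
dimension `w(n, s; a_1, a_2, a_3)`. -/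
def TStmt (n s : ℕ) (a : Fin 3 → ℕ) : Prop :=
  ∃ (ℓ m : Fin s → Fin (n + 1) → ℂ)
    (ℓ' m' : (i : Fin 3) → Fin (a i) → Fin (n + 1) → ℂ),
    (∀ (i : Fin 3) (j : Fin (a i)), memU i (ℓ' i j) ∧ memU i (m' i j)) ∧
    (Module.finrank ℂ (Wspace ℓ m ℓ' m') : ℤ) = expdimZ n s a

/-- `s_1(n) = 48k² + (11+4r)k + ⌊(4r²+22r+33)/48⌋` where `n = 24k + r`. -/
def s1 (n : ℕ) : ℕ :=
  48 * (n / 24) ^ 2 + (11 + 4 * (n % 24)) * (n / 24) +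
    (4 * (n % 24) ^ 2 + 22 * (n % 24) + 33) / 48

/-- `s_2(n) = s_1(n) + 1`. -/
def s2 (n : ℕ) : ℕ := s1 n + 1

/-- `t(n) = 4n − 37`. -/
def tfun (n : ℕ) : ℕ := 4 * n - 37

/-- The expected codimension `c(n)` of `W(n, t(n); s_1(n−24), 0, 0)`. -/
def cInt (n : ℕ) : ℤ :=
  ((n + 3).choose 3 : ℤ) - ((n - 21).choose 3 : ℤ) - (tfun n : ℤ) * (2 * n + 1) -
    48 * (s1 (n - 24) : ℤ)

open Module

lemma generic_li {E : Type*} [AddCommGroup E] [Module ℂ E] {κ : Type*} [Finite κ]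
    (A B D : κ → E) (z0 : ℂ)
    (h : LinearIndependent ℂ (fun i => A i + z0 • B i + z0 ^ 2 • D i)) :
    {z : ℂ | ¬ LinearIndependent ℂ (fun i => A i + z • B i + z ^ 2 • D i)}.Finite := by
  classical
  have := Fintype.ofFinite κ
  obtain ⟨g, hg⟩ := LinearMap.exists_leftInverse_of_injective
    (Finsupp.linearCombination ℂ (fun i => A i + z0 • B i + z0 ^ 2 • D i))
    (LinearMap.ker_eq_bot.2 h)
  let P : Matrix κ κ (Polynomial ℂ) := fun i j =>
    Polynomial.C (g (A i) j) + Polynomial.X * Polynomial.C (g (B i) j)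
      + Polynomial.X ^ 2 * Polynomial.C (g (D i) j)
  have hP : ∀ z, P.det.eval z
      = (Matrix.of fun i j => g (A i + z • B i + z ^ 2 • D i) j).det := by
    intro z
    have := RingHom.map_det (Polynomial.evalRingHom z) P
    rw [Polynomial.coe_evalRingHom] at this
    rw [this]
    congr 1
    ext i j
    rw [RingHom.mapMatrix_apply, Matrix.map_apply]
    simp [P]
    ring
  have h0 : P.det.eval z0 = 1 := by
    rw [hP, ← Matrix.det_one (n := κ)]
    congr 1
    ext i j
    have := LinearMap.congr_fun hg (Finsupp.single i 1)
    simp only [LinearMap.comp_apply, Finsupp.linearCombination_single, one_smul,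
      LinearMap.id_apply] at this
    rw [Matrix.of_apply, this, Matrix.one_apply, Finsupp.single_apply]
  have hne : P.det ≠ 0 := by
    intro h
    rw [h] at h0
    simp at h0
  refine (Polynomial.finite_setOfPred_isRoot hne).subset ?_
  intro z hz
  by_contra hr
  apply hz
  have hd : (Matrix.of fun i j => g (A i + z • B i + z ^ 2 • D i) j).det ≠ 0 := by
    rw [← hP]
    exact hr
  have hl := Matrix.linearIndependent_rows_of_det_ne_zero hd
  exact LinearIndependent.of_comp (Finsupp.lcoeFun ∘ₗ g) hl

lemma generic_rank {E : Type*} [AddCommGroup E] [Module ℂ E] {ι : Type*}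
    (A B D : ι → E) (z0 : ℂ)
    (hfin : ∀ z : ℂ, FiniteDimensional ℂ
      (Submodule.span ℂ (Set.range fun i => A i + z • B i + z ^ 2 • D i))) :
    {z : ℂ | ¬ finrank ℂ (Submodule.span ℂ (Set.range fun i => A i + z0 • B i + z0 ^ 2 • D i))
      ≤ finrank ℂ (Submodule.span ℂ
        (Set.range fun i => A i + z • B i + z ^ 2 • D i))}.Finite := by
  obtain ⟨κ, a, ha, hs, hl⟩ := exists_linearIndependent' ℂ
    (fun i => A i + z0 • B i + z0 ^ 2 • D i)
  have := hfin z0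
  rw [← hs]
  have : FiniteDimensional ℂ (Submodule.span ℂ
    (Set.range ((fun i => A i + z0 • B i + z0 ^ 2 • D i) ∘ a))) := by rw [hs]; infer_instance
  have hκ : Finite κ := by
    have := (linearIndependent_span hl).finite
    exact this
  have := Fintype.ofFinite κ
  rw [finrank_span_eq_card hl]
  refine (generic_li (A ∘ a) (B ∘ a) (D ∘ a) z0 hl).subset ?_
  intro z hz hz'
  apply hz
  have := hfin z
  rw [← finrank_span_eq_card hz']
  apply Submodule.finrank_mono
  apply Submodule.span_mono
  rintro _ ⟨i, rfl⟩
  exact ⟨a i, rfl⟩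

lemma finrank_hom (n : ℕ) :
    finrank ℂ (homogeneousSubmodule (Fin (n + 1)) ℂ 3) = (n + 3).choose 3 := by
  classical
  rw [homogeneousSubmodule_eq_finsupp_supported]
  let e : Sym (Fin (n + 1)) 3 ≃ ({d : Fin (n + 1) →₀ ℕ | d.degree = 3} : Set _) :=
    Sym.equivNatSum (Fin (n + 1)) 3
  let := Fintype.ofEquiv _ e
  rw [LinearEquiv.finrank_eq (AddMonoidAlgebra.supportedEquivFinsupp _), Module.finrank_finsupp_self,
    ← Fintype.card_congr e, Sym.card_sym_eq_choose]
  simp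

instance hom_fin (n : ℕ) :
    FiniteDimensional ℂ (homogeneousSubmodule (Fin (n + 1)) ℂ 3) :=
  Module.Finite.of_fg (homogeneousSubmodule_fg (σ := Fin (n + 1)) (R := ℂ) 3)

lemma lin_hom {n : ℕ} (v : Fin (n + 1) → ℂ) : (lin v).IsHomogeneous 1 := by
  apply IsHomogeneous.sum
  intro j _
  simpa using (isHomogeneous_C _ (v j)).mul (isHomogeneous_X ℂ j)

lemma tanCone_le_hom {n : ℕ} (ℓ m : Fin (n + 1) → ℂ) :
    tanCone 3 ℓ m ≤ homogeneousSubmodule (Fin (n + 1)) ℂ 3 := by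
  refine sup_le ?_ ?_ <;> (refine Submodule.span_le.2 ?_; rintro _ ⟨j, rfl⟩)
  · exact ((lin_hom ℓ).pow 2).mul (isHomogeneous_X ℂ j)
  · exact (((lin_hom ℓ).pow 1).mul (lin_hom m)).mul (isHomogeneous_X ℂ j)

lemma S3U_le_hom {n : ℕ} (i : Fin 3) :
    (S3U i : Submodule ℂ (MvPolynomial (Fin (n + 1)) ℂ)) ≤
      homogeneousSubmodule (Fin (n + 1)) ℂ 3 := by
  refine Submodule.span_le.2 ?_
  rintro _ ⟨a, b, c, -, -, -, rfl⟩
  exact ((lin_hom a).mul (lin_hom b)).mul (lin_hom c)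

lemma lin_add_smul {n : ℕ} (v d : Fin (n + 1) → ℂ) (z : ℂ) :
    lin (v + z • d) = lin v + z • lin d := by
  simp [lin, add_mul, Finset.sum_add_distrib, Finset.smul_sum, smul_eq_C_mul, mul_assoc]

lemma lin_mul_mem {n : ℕ} (f : MvPolynomial (Fin (n + 1)) ℂ) (v : Fin (n + 1) → ℂ) :
    f * lin v ∈ mulU f := by
  rw [lin, Finset.mul_sum]
  refine Submodule.sum_mem _ fun j _ => ?_
  have : f * (C (v j) * X j) = v j • (f * X j) := by rw [smul_eq_C_mul]; ring
  rw [this]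
  exact Submodule.smul_mem _ _ (Submodule.subset_span ⟨j, rfl⟩)

instance mulU_fin {n : ℕ} (f : MvPolynomial (Fin (n + 1)) ℂ) :
    FiniteDimensional ℂ (mulU f) :=
  FiniteDimensional.span_of_finite ℂ (Set.finite_range _)

lemma mulU_zero {n : ℕ} : mulU (0 : MvPolynomial (Fin (n + 1)) ℂ) = ⊥ := by
  refine le_bot_iff.1 (Submodule.span_le.2 ?_)
  rintro _ ⟨j, rfl⟩
  simp

lemma mulU_finrank {n : ℕ} (f : MvPolynomial (Fin (n + 1)) ℂ) :
    finrank ℂ (mulU f) ≤ n + 1 := by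
  have := finrank_range_le_card (R := ℂ) (fun j : Fin (n + 1) => f * X j)
  rw [Fintype.card_fin] at this
  exact this

lemma tanCone_finrank {n : ℕ} (ℓ m : Fin (n + 1) → ℂ) :
    finrank ℂ (tanCone 3 ℓ m) ≤ 2 * n + 1 := by
  unfold tanCone
  have h := Submodule.finrank_sup_add_finrank_inf_eq (mulU (lin ℓ ^ (3 - 1)))
    (mulU (lin ℓ ^ (3 - 2) * lin m))
  have h1 := mulU_finrank (lin ℓ ^ (3 - 1))
  have h2 := mulU_finrank (lin ℓ ^ (3 - 2) * lin m)
  by_cases hz : lin ℓ ^ (3 - 2) * lin m = 0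
  · rw [hz, mulU_zero] at h ⊢
    simp only [finrank_bot] at h
    omega
  by_cases hz' : lin ℓ ^ (3 - 1) = 0
  · exact absurd (by simpa using hz') (fun h0 : lin ℓ = 0 => hz (by simp [h0]))
  have hm : lin m ≠ 0 := fun h0 => hz (by simp [h0])
  have : 0 < finrank ℂ ↥(mulU (lin ℓ ^ (3 - 1)) ⊓ mulU (lin ℓ ^ (3 - 2) * lin m)) := by
    rw [Module.finrank_pos_iff, Submodule.nontrivial_iff_ne_bot, Submodule.ne_bot_iff]
    refine ⟨lin ℓ ^ (3 - 1) * lin m, ⟨lin_mul_mem _ _, ?_⟩, mul_ne_zero hz' hm⟩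
    have : lin ℓ ^ (3 - 1) * lin m = lin ℓ ^ (3 - 2) * lin m * lin ℓ := by
      norm_num; ring
    rw [this]
    exact lin_mul_mem _ _
  omega

instance tanCone_fin {n : ℕ} (ℓ m : Fin (n + 1) → ℂ) : FiniteDimensional ℂ (tanCone 3 ℓ m) := by
  unfold tanCone; infer_instance

lemma finrank_iSup_tan {n s : ℕ} (ℓ m : Fin s → Fin (n + 1) → ℂ) :
    finrank ℂ ↥(⨆ i, tanCone 3 (ℓ i) (m i)) ≤ (2 * n + 1) * s := by
  have key : ∀ t : Finset (Fin s),
      finrank ℂ ↥(t.sup fun i => tanCone 3 (ℓ i) (m i)) ≤ (2 * n + 1) * t.card := by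
    classical
    intro t
    induction t using Finset.induction_on with
    | empty => simp
    | insert i t hi ih =>
      rw [Finset.sup_insert, Finset.card_insert_of_notMem hi]
      refine (Submodule.finrank_add_le_finrank_add_finrank _ _).trans ?_
      have := tanCone_finrank (ℓ i) (m i)
      nlinarith
  have := key Finset.univ
  rw [Finset.sup_univ_eq_iSup] at this
  simpa using this

lemma tan_generic {n a : ℕ} (S : Submodule ℂ (MvPolynomial (Fin (n + 1)) ℂ))
    [FiniteDimensional ℂ S] (ℓ dl m dm : Fin a → Fin (n + 1) → ℂ) (z0 : ℂ) :
    {z : ℂ | ¬ finrank ℂ ↥(S ⊔ ⨆ i, tanCone 3 (ℓ i + z0 • dl i) (m i + z0 • dm i))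
      ≤ finrank ℂ ↥(S ⊔ ⨆ i, tanCone 3 (ℓ i + z • dl i) (m i + z • dm i))}.Finite := by
  let A : S ⊕ (Fin a × Fin (n + 1)) ⊕ (Fin a × Fin (n + 1)) → MvPolynomial (Fin (n + 1)) ℂ :=
    Sum.elim (fun s => s) (Sum.elim (fun p => lin (ℓ p.1) ^ 2 * X p.2)
      (fun p => lin (ℓ p.1) * lin (m p.1) * X p.2))
  let B : S ⊕ (Fin a × Fin (n + 1)) ⊕ (Fin a × Fin (n + 1)) → MvPolynomial (Fin (n + 1)) ℂ :=
    Sum.elim (fun _ => 0) (Sum.elim (fun p => 2 * lin (ℓ p.1) * lin (dl p.1) * X p.2)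
      (fun p => (lin (ℓ p.1) * lin (dm p.1) + lin (dl p.1) * lin (m p.1)) * X p.2))
  let D : S ⊕ (Fin a × Fin (n + 1)) ⊕ (Fin a × Fin (n + 1)) → MvPolynomial (Fin (n + 1)) ℂ :=
    Sum.elim (fun _ => 0) (Sum.elim (fun p => lin (dl p.1) ^ 2 * X p.2)
      (fun p => lin (dl p.1) * lin (dm p.1) * X p.2))
  have hspan : ∀ z : ℂ, Submodule.span ℂ (Set.range fun i => A i + z • B i + z ^ 2 • D i)
      = S ⊔ ⨆ i, tanCone 3 (ℓ i + z • dl i) (m i + z • dm i) := by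
    intro z
    have e1 : ∀ i j, A (Sum.inr (Sum.inl (i, j))) + z • B (Sum.inr (Sum.inl (i, j)))
        + z ^ 2 • D (Sum.inr (Sum.inl (i, j)))
        = lin (ℓ i + z • dl i) ^ (3 - 1) * X j := by
      intro i j
      simp only [A, B, D, Sum.elim_inl, Sum.elim_inr, lin_add_smul, smul_eq_C_mul, C_pow]
      norm_num
      ring
    have e2 : ∀ i j, A (Sum.inr (Sum.inr (i, j))) + z • B (Sum.inr (Sum.inr (i, j)))
        + z ^ 2 • D (Sum.inr (Sum.inr (i, j)))
        = lin (ℓ i + z • dl i) ^ (3 - 2) * lin (m i + z • dm i) * X j := by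
      intro i j
      simp only [A, B, D, Sum.elim_inr, lin_add_smul, smul_eq_C_mul, C_pow]
      norm_num
      ring
    apply le_antisymm
    · refine Submodule.span_le.2 ?_
      rintro _ ⟨s | ⟨i, j⟩ | ⟨i, j⟩, rfl⟩
      · refine Submodule.mem_sup_left ?_
        simp [A, B, D]
      · refine Submodule.mem_sup_right (Submodule.mem_iSup_of_mem i ?_)
        dsimp only
        rw [e1]
        exact Submodule.mem_sup_left (Submodule.subset_span ⟨j, rfl⟩)
      · refine Submodule.mem_sup_right (Submodule.mem_iSup_of_mem i ?_)
        dsimp only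
        rw [e2]
        exact Submodule.mem_sup_right (Submodule.subset_span ⟨j, rfl⟩)
    · refine sup_le ?_ (iSup_le fun i => sup_le ?_ ?_)
      · intro s hs
        refine Submodule.subset_span ⟨Sum.inl ⟨s, hs⟩, ?_⟩
        simp [A, B, D]
      · refine Submodule.span_le.2 ?_
        rintro _ ⟨j, rfl⟩
        exact Submodule.subset_span ⟨Sum.inr (Sum.inl (i, j)), e1 i j⟩
      · refine Submodule.span_le.2 ?_
        rintro _ ⟨j, rfl⟩
        exact Submodule.subset_span ⟨Sum.inr (Sum.inr (i, j)), e2 i j⟩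
  have := generic_rank A B D z0 (fun z => by rw [hspan]; infer_instance)
  refine this.subset fun z hz => ?_
  rw [Set.mem_ofPred_eq] at hz ⊢
  rw [hspan, hspan]
  exact hz

/-- Padding by 24 zeros. -/
def pad {N : ℕ} (v : Fin (N + 1) → ℂ) : Fin (N + 24 + 1) → ℂ := fun j =>
  if h : 24 ≤ (j : ℕ) then v ⟨j - 24, by omega⟩ else 0

/-- Shift of the indices by 24. -/
def shift {N : ℕ} (j : Fin (N + 1)) : Fin (N + 24 + 1) := ⟨j + 24, by omega⟩

lemma shift_inj {N : ℕ} : Function.Injective (shift (N := N)) := by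
  intro i j h
  simp only [shift, Fin.mk.injEq] at h
  ext; omega

lemma lin_pad {N : ℕ} (v : Fin (N + 1) → ℂ) : lin (pad v) = rename shift (lin v) := by
  simp only [lin, map_sum, map_mul, rename_C, rename_X]
  symm
  refine Fintype.sum_of_injective shift shift_inj _ _ ?_ ?_
  · intro i hi
    have : pad v i = 0 := by
      unfold pad
      rw [dif_neg]
      intro h
      exact hi ⟨⟨i - 24, by omega⟩, by ext; simp [shift]; omega⟩
    simp [this]
  · intro i
    simp [pad, shift]

lemma pad_add_smul {N : ℕ} (v d : Fin (N + 1) → ℂ) (z : ℂ) :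
    pad (v + z • d) = pad v + z • pad d := by
  ext j
  by_cases h : 24 ≤ (j : ℕ) <;> simp [pad, h]

lemma pad_of_memU {N : ℕ} (v : Fin (N + 24 + 1) → ℂ) (h : memU 0 v) :
    pad (fun j => v (shift j)) = v := by
  ext j
  by_cases hj : 24 ≤ (j : ℕ)
  · simp only [pad, hj, dif_pos]
    congr 1
    ext; simp [shift]; omega
  · simp only [pad, hj, dif_neg, not_false_eq_true]
    exact (h j (by simp) (by simp; omega)).symm

lemma memU_pad {N : ℕ} (v : Fin (N + 1) → ℂ) : memU 0 (pad v) := by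
  intro j _ h
  simp only [pad]
  rw [dif_neg]
  simp at h
  omega

lemma X_eq_lin {n : ℕ} (j : Fin (n + 1)) : (X j : MvPolynomial (Fin (n + 1)) ℂ)
    = lin (Pi.single j 1) := by
  classical
  simp [lin, Pi.single_apply]

lemma S3U_finrank {N : ℕ} :
    finrank ℂ (S3U 0 : Submodule ℂ (MvPolynomial (Fin (N + 24 + 1)) ℂ)) ≤ (N + 3).choose 3 := by
  rw [← finrank_hom]
  refine le_trans (Submodule.finrank_mono
    (t := (homogeneousSubmodule (Fin (N + 1)) ℂ 3).map (rename shift).toLinearMap) ?_)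
    (Submodule.finrank_map_le _ _)
  refine Submodule.span_le.2 ?_
  rintro _ ⟨a, b, c, ha, hb, hc, rfl⟩
  refine ⟨lin (fun j => a (shift j)) * lin (fun j => b (shift j)) * lin (fun j => c (shift j)),
    ((lin_hom _).mul (lin_hom _)).mul (lin_hom _), ?_⟩
  simp only [AlgHom.toLinearMap_apply, map_mul, ← lin_pad, pad_of_memU _ ha, pad_of_memU _ hb,
    pad_of_memU _ hc]

lemma map_tan_le {N : ℕ} (ℓ m : Fin (N + 1) → ℂ) :
    (tanCone 3 ℓ m).map (rename shift).toLinearMap ≤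
      S3U 0 ⊓ tanCone 3 (pad ℓ) (pad m) := by
  unfold tanCone
  rw [Submodule.map_sup]
  refine sup_le ?_ ?_ <;>
    (unfold mulU; rw [Submodule.map_span]; refine Submodule.span_le.2 ?_
     rintro _ ⟨_, ⟨j, rfl⟩, rfl⟩)
  · have : (rename shift).toLinearMap (lin ℓ ^ (3 - 1) * X j) =
        lin (pad ℓ) ^ (3 - 1) * X (shift j) := by
      simp [lin_pad]
    rw [this]
    refine ⟨Submodule.subset_span ⟨pad ℓ, pad ℓ, pad (Pi.single j 1), memU_pad _, memU_pad _,
      memU_pad _, ?_⟩, Submodule.mem_sup_left (Submodule.subset_span ⟨shift j, rfl⟩)⟩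
    rw [lin_pad (Pi.single j 1), ← X_eq_lin, rename_X]
    norm_num; ring
  · have : (rename shift).toLinearMap (lin ℓ ^ (3 - 2) * lin m * X j) =
        lin (pad ℓ) ^ (3 - 2) * lin (pad m) * X (shift j) := by
      simp [lin_pad]
    rw [this]
    refine ⟨Submodule.subset_span ⟨pad ℓ, pad m, pad (Pi.single j 1), memU_pad _, memU_pad _,
      memU_pad _, ?_⟩, Submodule.mem_sup_right (Submodule.subset_span ⟨shift j, rfl⟩)⟩
    rw [lin_pad (Pi.single j 1), ← X_eq_lin, rename_X]
    norm_num

lemma s1_add (N : ℕ) (hN : 8 ≤ N) : s1 (N + 24) = s1 N + tfun (N + 24) := by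
  unfold s1 tfun
  rw [Nat.add_div_right _ (by norm_num), Nat.add_mod_right]
  have := Nat.div_add_mod N 24
  generalize N / 24 = k at *
  generalize N % 24 = r at *
  generalize (4 * r ^ 2 + 22 * r + 33) / 48 = q
  subst this
  have : 4 * (24 * k + r + 24) - 37 = 96 * k + 4 * r + 59 := by omega
  rw [this]
  ring

lemma s1_bounds (N : ℕ) : 48 * s1 N ≤ 4 * N ^ 2 + 22 * N + 33 ∧
    4 * N ^ 2 + 22 * N + 33 < 48 * (s1 N + 1) := by
  unfold s1
  have := Nat.div_add_mod N 24
  generalize N / 24 = k at *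
  generalize N % 24 = r at *
  have h1 := Nat.div_add_mod (4 * r ^ 2 + 22 * r + 33) 48
  have h2 := Nat.mod_lt (4 * r ^ 2 + 22 * r + 33) (show 48 > 0 by norm_num)
  generalize (4 * r ^ 2 + 22 * r + 33) / 48 = q at *
  generalize (4 * r ^ 2 + 22 * r + 33) % 48 = u at *
  subst this
  constructor <;> nlinarith

lemma choose3 (n : ℕ) : 6 * ((n + 3).choose 3 : ℤ) = (n + 3) * (n + 2) * (n + 1) := by
  have h := Nat.add_one_mul_choose_eq (n + 2) 2
  have h2 := Nat.add_one_mul_choose_eq (n + 1) 1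
  simp only [Nat.choose_one_right] at h h2
  zify at h h2
  push_cast at *
  linear_combination (-2) * h - (n + 3) * h2

lemma W_zero {n s : ℕ} (ℓ m : Fin s → Fin (n + 1) → ℂ)
    (ℓ' m' : (i : Fin 3) → Fin ((![0, 0, 0] : Fin 3 → ℕ) i) → Fin (n + 1) → ℂ) :
    Wspace ℓ m ℓ' m' = ⨆ i, tanCone 3 (ℓ i) (m i) := by
  unfold Wspace
  have : IsEmpty {i : Fin 3 // (![0, 0, 0] : Fin 3 → ℕ) i ≠ 0} :=
    ⟨fun ⟨i, hi⟩ => hi (by fin_cases i <;> rfl)⟩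
  rw [iSup_of_empty, bot_sup_eq]

lemma W_one {n s a : ℕ} (ha : a ≠ 0) (ℓ m : Fin s → Fin (n + 1) → ℂ)
    (ℓ' m' : (i : Fin 3) → Fin ((![a, 0, 0] : Fin 3 → ℕ) i) → Fin (n + 1) → ℂ) :
    Wspace ℓ m ℓ' m' = (S3U 0 ⊔ ⨆ j : Fin a, tanCone 3 (ℓ' 0 j) (m' 0 j))
      ⊔ ⨆ i, tanCone 3 (ℓ i) (m i) := by
  unfold Wspace
  congr 1
  apply le_antisymm
  · refine iSup_le ?_
    rintro ⟨i, hi⟩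
    fin_cases i
    · exact le_rfl
    · exact absurd rfl hi
    · exact absurd rfl hi
  · exact le_iSup (fun i : {i : Fin 3 // (![a, 0, 0] : Fin 3 → ℕ) i ≠ 0} =>
      (S3U i.1 ⊔ ⨆ j : Fin ((![a, 0, 0] : Fin 3 → ℕ) i.1), tanCone 3 (ℓ' i.1 j) (m' i.1 j)))
      ⟨0, ha⟩

lemma exp_zero (n s : ℕ) : expdimZ n s ![0, 0, 0]
    = min ((2 * n + 1) * s : ℤ) ((n + 3).choose 3) := by
  have : kcount ![0, 0, 0] = 0 := by decide
  simp [expdimZ, this, altsum]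

lemma exp_one (N s a : ℕ) (ha : a ≠ 0) : expdimZ (N + 24) s ![a, 0, 0]
    = min (((N + 3).choose 3 : ℤ) + 48 * a + (2 * (N + 24) + 1) * s)
      ((N + 27).choose 3) := by
  have : kcount ![a, 0, 0] = 1 := by
    unfold kcount
    rw [Finset.card_eq_one]
    refine ⟨0, ?_⟩
    ext i
    fin_cases i <;> simp [ha]
  have e : N + 24 + 3 - 24 * 1 = N + 3 := by omega
  simp only [expdimZ, this, altsum, Finset.Icc_self, Finset.sum_singleton, e]
  have e2 : (![a, 0, 0] : Fin 3 → ℕ) 0 + (![a, 0, 0] : Fin 3 → ℕ) 1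
    + (![a, 0, 0] : Fin 3 → ℕ) 2 = a := rfl
  have e3 : N + 24 + 3 = N + 27 := rfl
  rw [e2, e3, Nat.sub_self, pow_zero, Nat.choose_self, Nat.cast_one, one_mul, one_mul,
    Nat.cast_add, Nat.cast_ofNat]

lemma main_step (N t a : ℕ) (ha : a ≠ 0)
    (h1 : TStmt (N + 24) t ![a, 0, 0]) (h2 : TStmt N a ![0, 0, 0]) :
    ∃ ℓ m : Fin (a + t) → Fin (N + 24 + 1) → ℂ,
      min (((N + 3).choose 3 : ℤ) + 48 * a + (2 * (N + 24) + 1) * t) ((N + 27).choose 3)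
        + min ((2 * N + 1) * a : ℤ) ((N + 3).choose 3) ≤
      finrank ℂ ↥(⨆ i, tanCone 3 (ℓ i) (m i)) + (N + 3).choose 3 := by
  obtain ⟨ℓ, m, ℓ', m', hmem, hr⟩ := h1
  obtain ⟨p, q, _, _, _, hr2⟩ := h2
  rw [W_one ha, exp_one _ _ _ ha] at hr
  rw [W_zero, exp_zero] at hr2
  let T : Submodule ℂ (MvPolynomial (Fin (N + 24 + 1)) ℂ) := ⨆ i, tanCone 3 (ℓ i) (m i)
  have hSf : FiniteDimensional ℂ
      (S3U 0 : Submodule ℂ (MvPolynomial (Fin (N + 24 + 1)) ℂ)) :=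
    Submodule.finiteDimensional_of_le (S3U_le_hom 0)
  let l0 : Fin a → Fin (N + 1) → ℂ := fun i j => ℓ' 0 i (shift j)
  let m0 : Fin a → Fin (N + 1) → ℂ := fun i j => m' 0 i (shift j)
  have f1 := tan_generic (S3U 0 ⊔ T) (fun i => pad (l0 i)) (fun i => pad (p i - l0 i))
    (fun i => pad (m0 i)) (fun i => pad (q i - m0 i)) 0
  have f2 := tan_generic ⊥ l0 (fun i => p i - l0 i) m0 (fun i => q i - m0 i) 1
  obtain ⟨z, hz⟩ := (f1.union f2).exists_notMem
  simp only [Set.mem_union, Set.mem_ofPred_eq, not_or, not_not] at hz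
  obtain ⟨hz1, hz2⟩ := hz
  have hl0 : ∀ i, pad (l0 i) = ℓ' 0 i := fun i => pad_of_memU _ (hmem 0 i).1
  have hm0 : ∀ i, pad (m0 i) = m' 0 i := fun i => pad_of_memU _ (hmem 0 i).2
  have g0 : (⨆ i, tanCone 3 (pad (l0 i) + (0 : ℂ) • pad (p i - l0 i))
      (pad (m0 i) + (0 : ℂ) • pad (q i - m0 i)))
      = ⨆ j : Fin a, tanCone 3 (ℓ' 0 j) (m' 0 j) := by
    refine iSup_congr fun i => ?_
    rw [zero_smul, zero_smul, add_zero, add_zero, hl0, hm0]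
  have g1 : (⨆ i, tanCone 3 (pad (l0 i) + z • pad (p i - l0 i))
      (pad (m0 i) + z • pad (q i - m0 i)))
      = ⨆ i, tanCone 3 (pad (l0 i + z • (p i - l0 i))) (pad (m0 i + z • (q i - m0 i))) := by
    refine iSup_congr fun i => ?_
    rw [pad_add_smul, pad_add_smul]
  have g2 : (⨆ i, tanCone 3 (l0 i + (1 : ℂ) • (p i - l0 i))
      (m0 i + (1 : ℂ) • (q i - m0 i))) = ⨆ i, tanCone 3 (p i) (q i) := by
    refine iSup_congr fun i => ?_
    rw [one_smul, one_smul, add_sub_cancel, add_sub_cancel]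
  rw [g0, g1] at hz1
  rw [g2, bot_sup_eq, bot_sup_eq] at hz2
  rw [sup_right_comm] at hr
  change (finrank ℂ ↥(S3U 0 ⊔ T ⊔ ⨆ j : Fin a, tanCone 3 (ℓ' 0 j) (m' 0 j)) : ℤ) = _ at hr
  let lz : Fin a → Fin (N + 1) → ℂ := fun i => l0 i + z • (p i - l0 i)
  let mz : Fin a → Fin (N + 1) → ℂ := fun i => m0 i + z • (q i - m0 i)
  let V : Submodule ℂ (MvPolynomial (Fin (N + 24 + 1)) ℂ) :=
    ⨆ i, tanCone 3 (pad (lz i)) (pad (mz i))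
  let V2 : Submodule ℂ (MvPolynomial (Fin (N + 1)) ℂ) := ⨆ i, tanCone 3 (lz i) (mz i)
  change _ ≤ finrank ℂ ↥(S3U 0 ⊔ T ⊔ V) at hz1
  change _ ≤ finrank ℂ ↥V2 at hz2
  refine ⟨Fin.append (fun i => pad (lz i)) ℓ, Fin.append (fun i => pad (mz i)) m, ?_⟩
  have hW : (⨆ i, tanCone 3 (Fin.append (fun i => pad (lz i)) ℓ i)
      (Fin.append (fun i => pad (mz i)) m i)) = V ⊔ T := by
    apply le_antisymm
    · refine iSup_le fun i => ?_
      refine Fin.addCases (fun i => ?_) (fun i => ?_) i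
      · rw [Fin.append_left, Fin.append_left]
        exact le_sup_of_le_left (le_iSup (fun i => tanCone 3 (pad (lz i)) (pad (mz i))) i)
      · rw [Fin.append_right, Fin.append_right]
        exact le_sup_of_le_right (le_iSup (fun i => tanCone 3 (ℓ i) (m i)) i)
    · refine sup_le (iSup_le fun i => ?_) (iSup_le fun i => ?_)
      · refine le_iSup_of_le (Fin.castAdd t i) ?_
        rw [Fin.append_left, Fin.append_left]
      · refine le_iSup_of_le (Fin.natAdd a i) ?_
        rw [Fin.append_right, Fin.append_right]
  rw [hW]
  have hd := Submodule.finrank_sup_add_finrank_inf_eq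
    (S3U 0 : Submodule ℂ (MvPolynomial (Fin (N + 24 + 1)) ℂ)) (V ⊔ T)
  have hS := S3U_finrank (N := N)
  have e1 : (S3U 0 ⊔ (V ⊔ T)) = S3U 0 ⊔ T ⊔ V := by rw [sup_assoc, sup_comm V T]
  rw [e1] at hd
  have hV2 : V2.map (rename shift).toLinearMap ≤ S3U 0 ⊓ (V ⊔ T) := by
    rw [Submodule.map_iSup]
    refine iSup_le fun i => (map_tan_le _ _).trans ?_
    refine inf_le_inf_left _ (le_sup_of_le_left ?_)
    exact le_iSup (fun i => tanCone 3 (pad (lz i)) (pad (mz i))) i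
  have h3 := Submodule.finrank_mono hV2
  have h4 : finrank ℂ ↥(V2.map (rename shift).toLinearMap) = finrank ℂ V2 :=
    (LinearEquiv.finrank_eq (Submodule.equivMapOfInjective (rename shift).toLinearMap
      (rename_injective _ shift_inj) V2)).symm
  rw [h4] at h3
  rw [← hr, ← hr2]
  have : finrank ℂ ↥(S3U 0 ⊔ T ⊔ ⨆ j : Fin a, tanCone 3 (ℓ' 0 j) (m' 0 j))
    + finrank ℂ ↥(⨆ i, tanCone 3 (p i) (q i))
    ≤ finrank ℂ ↥(V ⊔ T) + (N + 3).choose 3 := by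
    have hz1' : finrank ℂ ↥(S3U 0 ⊔ T ⊔ ⨆ j : Fin a, tanCone 3 (ℓ' 0 j) (m' 0 j)) ≤
      finrank ℂ ↥(S3U 0 ⊔ T ⊔ V) := hz1
    omega
  exact_mod_cast this

/-- Proposition 3.7 (i): for `n ≥ 32`, truth of `T(n, t(n); s_i(n−24), 0, 0)` and of
`T(n−24, s_i(n−24); 0, 0, 0)` implies truth of `T(n, s_i(n); 0, 0, 0)`. -/
theorem induction_step_i (si : ℕ → ℕ) (hsi : si = s1 ∨ si = s2) (n : ℕ) (hn : 32 ≤ n)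
    (h1 : TStmt n (tfun n) ![si (n - 24), 0, 0])
    (h2 : TStmt (n - 24) (si (n - 24)) ![0, 0, 0]) :
    TStmt n (si n) ![0, 0, 0] := by
  obtain ⟨N, rfl⟩ : ∃ N, n = N + 24 := ⟨n - 24, by omega⟩
  rw [Nat.add_sub_cancel] at h1 h2
  have hN : 8 ≤ N := by omega
  have hs : si (N + 24) = si N + tfun (N + 24) := by
    rcases hsi with rfl | rfl
    · exact s1_add N hN
    · simp only [s2, s1_add N hN]; ring
  obtain ⟨b1, b2⟩ := s1_bounds N
  have hpos : s1 N ≠ 0 := by nlinarith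
  have ha : si N ≠ 0 := by
    rcases hsi with rfl | rfl
    · exact hpos
    · simp [s2]
  obtain ⟨ℓ, m, h⟩ := main_step N _ _ ha h1 h2
  rw [hs]
  refine ⟨ℓ, m, fun _ _ => 0, fun _ _ => 0, fun i j => ⟨fun _ _ _ => rfl, fun _ _ _ => rfl⟩, ?_⟩
  rw [W_zero, exp_zero]
  have u1 := finrank_iSup_tan ℓ m
  have u2 : finrank ℂ ↥(⨆ i, tanCone 3 (ℓ i) (m i)) ≤ (N + 24 + 3).choose 3 := by
    rw [← finrank_hom]
    exact Submodule.finrank_mono (iSup_le fun i => tanCone_le_hom _ _)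
  have ht : (tfun (N + 24) : ℤ) = 4 * N + 59 := by
    unfold tfun
    omega
  have c1 := choose3 N
  have c2 := choose3 (N + 24)
  zify at u1 u2 b1 b2 hN
  rw [show N + 27 = N + 24 + 3 from rfl] at h
  push_cast at u1 u2 c2 ⊢
  rw [ht] at u1 h ⊢
  generalize (finrank ℂ ↥(⨆ i, tanCone 3 (ℓ i) (m i)) : ℤ) = F at *
  generalize ((N + 3).choose 3 : ℤ) = P at *
  generalize ((N + 24 + 3).choose 3 : ℤ) = Q at *
  rcases hsi with rfl | rfl
  · generalize (s1 N : ℤ) = a at *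
    have i1 : P + 48 * a + (2 * (N + 24) + 1) * (4 * N + 59) ≤ Q := by nlinarith
    have i2 : (2 * N + 1) * a ≤ P := by nlinarith
    rw [min_eq_left i1, min_eq_left i2] at h
    rw [min_eq_left (by nlinarith)]
    nlinarith
  · simp only [s2] at u1 h ⊢
    push_cast at u1 h ⊢
    generalize (s1 N : ℤ) = a at *
    have i1 : Q ≤ P + 48 * (a + 1) + (2 * (N + 24) + 1) * (4 * N + 59) := by nlinarith
    have i2 : P ≤ (2 * N + 1) * (a + 1) := by nlinarith
    rw [min_eq_right i1, min_eq_right i2] at h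
    rw [min_eq_right (by nlinarith)]
    linarith
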